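/- arXiv:2105.11674 — 9 statements merged into one kernel-verified Lean document; each statement's English description precedes it below -/
import Mathlib

section
/- For every n, every history h, and any belief b satisfying the Bayes recursion, the n-step history value equals the belief-expectation of the n-step history-state value: VH n h = Σ_s b h s * V n h s. (Finite-horizon form of the paper's Theorem 4: the history-state value is an unbiased estimate of the history value, v^π(h) = E_{s∼b(h)}[v^π(h,s)].) -/
/-- Finite-horizon form of Theorem 4: the history value equals the
belief-expectation of the history-state value. -/
theorem history_value_eq_belief_expectation_of_history_state_value
    {S A O : Type*} [Fintype S] [Fintype A] [Fintype O]
    [Nonempty S] [Nonempty A] [Nonempty O]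
    (T : S → A → PMF S) (Z : S → PMF O) (R : S → A → ℝ)
    (γ : ℝ) (hγ0 : 0 ≤ γ) (hγ1 : γ < 1)
    (π : List (A × O) → PMF A)
    (b : List (A × O) → PMF S)
    (hb : ∀ (h : List (A × O)) (a : A) (o : O) (s' : S),
      (b (h ++ [(a, o)]) s').toReal *
        (∑ s : S, ∑ t : S, (b h s).toReal * (T s a t).toReal * (Z t o).toReal)
      = ∑ s : S, (b h s).toReal * (T s a s').toReal * (Z s' o).toReal)
    (V : ℕ → List (A × O) → S → ℝ)
    (hV0 : ∀ h s, V 0 h s = 0)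
    (hV : ∀ n h s, V (n + 1) h s =
      ∑ a : A, (π h a).toReal *
        (R s a + γ * ∑ s' : S, (T s a s').toReal *
          ∑ o : O, (Z s' o).toReal * V n (h ++ [(a, o)]) s'))
    (VH : ℕ → List (A × O) → ℝ)
    (hVH0 : ∀ h, VH 0 h = 0)
    (hVH : ∀ n h, VH (n + 1) h =
      ∑ a : A, (π h a).toReal *
        ((∑ s : S, (b h s).toReal * R s a) +
          γ * ∑ o : O,
            (∑ s : S, ∑ s' : S,
              (b h s).toReal * (T s a s').toReal * (Z s' o).toReal) *
            VH n (h ++ [(a, o)]))) :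
    ∀ (n : ℕ) (h : List (A × O)),
      VH n h = ∑ s : S, (b h s).toReal * V n h s := by
  intro n
  induction n with
  | zero => simp [hV0, hVH0]
  | succ n ih =>
    intro h
    have future_value (a : A) :
        ∑ o : O, (∑ s : S, ∑ s' : S,
            (b h s).toReal * (T s a s').toReal * (Z s' o).toReal) * VH n (h ++ [(a, o)])
          = ∑ s : S, (b h s).toReal * ∑ s' : S, (T s a s').toReal *
              ∑ o : O, (Z s' o).toReal * V n (h ++ [(a, o)]) s' := by
      calc
        _ = ∑ o : O, ∑ s' : S, ∑ s : S, (b h s).toReal * (T s a s').toReal *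
              (Z s' o).toReal * V n (h ++ [(a, o)]) s' := by
          refine Finset.sum_congr rfl fun o _ => ?_
          rw [ih, Finset.mul_sum]
          refine Finset.sum_congr rfl fun s' _ => ?_
          rw [← Finset.sum_mul, ← hb h a o s']
          ring
        _ = ∑ s : S, ∑ s' : S, ∑ o : O, (b h s).toReal * (T s a s').toReal *
              (Z s' o).toReal * V n (h ++ [(a, o)]) s' := by
          rw [Finset.sum_comm, Finset.sum_comm (s := (Finset.univ : Finset S))
            (t := (Finset.univ : Finset S)) (f := fun s s' => ∑ o : O, _)]
          exact Finset.sum_congr rfl fun s' _ => Finset.sum_comm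
        _ = _ := by simp only [Finset.mul_sum, mul_assoc]
    simp only [hVH, hV, future_value, Finset.mul_sum (s := (Finset.univ : Finset A))]
    rw [Finset.sum_comm]
    refine Finset.sum_congr rfl fun a _ => ?_
    rw [Finset.mul_sum (a := γ), ← Finset.sum_add_distrib, Finset.mul_sum]
    refine Finset.sum_congr rfl fun s _ => ?_
    ring
end

section
/- For every n, every history h, and every action a, and any belief b satisfying the Bayes recursion, the history action-value equals the belief-expectation of the history-state action-value: QH n h a = Σ_s b h s * QHS n h s a. (The key identity Q^π(h,a) = E_{s∼b(h)}[Q^π(h,s,a)] proved inside the paper's Theorem 5.) -/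
/-- The history action-value equals the belief-expectation of the
history-state action-value: Q^π(h,a) = E_{s∼b(h)}[Q^π(h,s,a)]. -/
theorem history_action_value_eq_belief_expectation
    {S A O : Type*} [Fintype S] [Fintype A] [Fintype O]
    [Nonempty S] [Nonempty A] [Nonempty O]
    (T : S → A → PMF S) (Z : S → PMF O) (R : S → A → ℝ)
    (γ : ℝ) (hγ0 : 0 ≤ γ) (hγ1 : γ < 1)
    (π : List (A × O) → PMF A)
    (b : List (A × O) → PMF S)
    (hb : ∀ (h : List (A × O)) (a : A) (o : O) (s' : S),
      (b (h ++ [(a, o)]) s').toReal *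
        (∑ s : S, ∑ t : S, (b h s).toReal * (T s a t).toReal * (Z t o).toReal)
      = ∑ s : S, (b h s).toReal * (T s a s').toReal * (Z s' o).toReal)
    (V : ℕ → List (A × O) → S → ℝ)
    (hV0 : ∀ h s, V 0 h s = 0)
    (hV : ∀ n h s, V (n + 1) h s =
      ∑ a : A, (π h a).toReal *
        (R s a + γ * ∑ s' : S, (T s a s').toReal *
          ∑ o : O, (Z s' o).toReal * V n (h ++ [(a, o)]) s'))
    (VH : ℕ → List (A × O) → ℝ)
    (hVH0 : ∀ h, VH 0 h = 0)
    (hVH : ∀ n h, VH (n + 1) h =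
      ∑ a : A, (π h a).toReal *
        ((∑ s : S, (b h s).toReal * R s a) +
          γ * ∑ o : O,
            (∑ s : S, ∑ s' : S,
              (b h s).toReal * (T s a s').toReal * (Z s' o).toReal) *
            VH n (h ++ [(a, o)])))
    (QHS : ℕ → List (A × O) → S → A → ℝ)
    (hQHS : ∀ n h s a, QHS n h s a =
      R s a + γ * ∑ s' : S, (T s a s').toReal *
        ∑ o : O, (Z s' o).toReal * V n (h ++ [(a, o)]) s')
    (QH : ℕ → List (A × O) → A → ℝ)
    (hQH : ∀ n h a, QH n h a =
      (∑ s : S, (b h s).toReal * R s a) +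
        γ * ∑ o : O,
          (∑ s : S, ∑ s' : S,
            (b h s).toReal * (T s a s').toReal * (Z s' o).toReal) *
          VH n (h ++ [(a, o)])) :
    ∀ (n : ℕ) (h : List (A × O)) (a : A),
      QH n h a = ∑ s : S, (b h s).toReal * QHS n h s a := by
  have action_value_of_value : ∀ n, (∀ h, VH n h = ∑ s : S, (b h s).toReal * V n h s) →
      ∀ h a, QH n h a = ∑ s : S, (b h s).toReal * QHS n h s a := by
    intro n hn h a
    have bayes : ∀ o : O,
        (∑ s : S, ∑ s' : S, (b h s).toReal * (T s a s').toReal * (Z s' o).toReal) *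
          VH n (h ++ [(a, o)]) =
        ∑ s' : S, ∑ s : S, (b h s).toReal * (T s a s').toReal * (Z s' o).toReal *
          V n (h ++ [(a, o)]) s' := by
      intro o
      rw [hn, Finset.mul_sum]
      refine Finset.sum_congr rfl fun s' _ => ?_
      rw [← Finset.sum_mul, ← hb h a o s']
      ring
    have future : ∑ o : O, ∑ s' : S, ∑ s : S,
          (b h s).toReal * (T s a s').toReal * (Z s' o).toReal * V n (h ++ [(a, o)]) s' =
        ∑ s : S, (b h s).toReal * ∑ s' : S, (T s a s').toReal *
          ∑ o : O, (Z s' o).toReal * V n (h ++ [(a, o)]) s' := by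
      simp only [Finset.mul_sum, ← mul_assoc]
      rw [Finset.sum_comm]
      conv_rhs => rw [Finset.sum_comm]
      exact Finset.sum_congr rfl fun s' _ => Finset.sum_comm
    simp only [hQH, hQHS, bayes, future, mul_add, Finset.sum_add_distrib, Finset.mul_sum]
    simp only [mul_left_comm γ]
  have value_eq : ∀ n h, VH n h = ∑ s : S, (b h s).toReal * V n h s := by
    intro n
    induction n with
    | zero => simp [hV0, hVH0]
    | succ n ih =>
      intro h
      simp only [hVH, hV, ← hQH, ← hQHS, action_value_of_value n ih h]
      simp only [Finset.mul_sum]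
      rw [Finset.sum_comm]
      exact Finset.sum_congr rfl fun s _ => Finset.sum_congr rfl fun a _ => mul_left_comm _ _ _
  exact fun n => action_value_of_value n (value_eq n)
end

section
/- Belief correctness: for every n, the joint distribution of (history, current state) after n steps factorizes through the belief: jointPMF n = (histPMF n).bind (fun h => (b h).map (fun s => (h, s))), where histPMF n := (jointPMF n).map Prod.fst and b is any belief satisfying the Bayes recursion with b [] = μ. (The fact that the conditional distribution of the latent state given the observable history equals the belief-state b(h) = Pr(S | h), underlying the paper's asymmetric policy gradient theorem.) -/
open scoped ENNReal

namespace PMF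

/-- If the posterior `β` satisfies Bayes' rule for the prior predictive state `ρ` and the
observation kernel `Z`, then sampling a state and then an observation is the same as sampling
the observation from its marginal and then a state from the posterior. -/
theorem bind_bind_pure_eq_of_bayes {S O : Type*} (ρ : PMF S) (Z : S → PMF O) (β : O → PMF S)
    (hβ : ∀ o s, β o s * (ρ.bind Z) o = ρ s * Z s o) :
    (ρ.bind fun s => (Z s).bind fun o => pure (o, s)) =
      (ρ.bind Z).bind fun o => (β o).bind fun s => pure (o, s) := by
  classical
  ext ⟨o, s⟩
  have hl : ∀ t, (Z t).bind (fun o' => pure (o', t)) (o, s) = if t = s then Z s o else 0 := by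
    intro t
    rw [bind_apply, tsum_eq_single o]
    · rcases eq_or_ne t s with rfl | h
      · simp [pure_apply]
      · simp [pure_apply, h, h.symm]
    · intro o' ho'
      simp [pure_apply, ho'.symm]
  have hr : ∀ o', (β o').bind (fun t => pure (o', t)) (o, s) = if o' = o then β o s else 0 := by
    intro o'
    rw [bind_apply, tsum_eq_single s]
    · rcases eq_or_ne o' o with rfl | h
      · simp [pure_apply]
      · simp [pure_apply, h, h.symm]
    · intro t ht
      simp [pure_apply, ht.symm]
  rw [bind_apply, bind_apply _ _ (o, s)]
  simp only [hl, hr, mul_ite, mul_zero, tsum_ite_eq]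
  rw [mul_comm (ρ.bind Z o), hβ]

/-- A distribution that is a mixture of graph kernels `h ↦ (h, b h)` has the mixing distribution
as its first marginal. -/
theorem map_fst_bind_map_mk {H S : Type*} (ν : PMF H) (b : H → PMF S) :
    (ν.bind fun h => (b h).map fun s => (h, s)).map Prod.fst = ν := by
  simp only [map_bind, map_comp, Function.comp_def]
  have : ∀ h, (b h).map (fun _ => h) = pure h := fun h => map_const (b h) h
  simp [this]

end PMF

/-- The Bayes recursion in `ℝ≥0∞`, with sums expressed through the predictive distribution. -/
theorem belief_bayes_ennreal {S O : Type*} [Fintype S] (p : PMF S) (T : S → PMF S)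
    (Z : S → PMF O) (q : PMF S) (o : O) (s' : S)
    (h : (q s').toReal * (∑ s : S, ∑ t : S, (p s).toReal * (T s t).toReal * (Z t o).toReal)
      = ∑ s : S, (p s).toReal * (T s s').toReal * (Z s' o).toReal) :
    q s' * ((p.bind T).bind Z) o = (p.bind T) s' * Z s' o := by
  have hr : ((p.bind T).bind Z) o = ∑ s : S, ∑ t : S, p s * T s t * Z t o := by
    simp only [PMF.bind_apply, tsum_fintype, Finset.sum_mul]
    exact Finset.sum_comm
  have hl : (p.bind T) s' * Z s' o = ∑ s : S, p s * T s s' * Z s' o := by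
    simp only [PMF.bind_apply, tsum_fintype, Finset.sum_mul]
  have hfin : ∀ s t, p s * T s t * Z t o ≠ ∞ := fun s t =>
    ENNReal.mul_ne_top (ENNReal.mul_ne_top (p.apply_ne_top s) ((T s).apply_ne_top t))
      ((Z t).apply_ne_top o)
  rw [← ENNReal.toReal_eq_toReal_iff' (ENNReal.mul_ne_top (q.apply_ne_top _) (PMF.apply_ne_top _ _))
    (ENNReal.mul_ne_top (PMF.apply_ne_top _ _) (PMF.apply_ne_top _ _)), hr, hl, ENNReal.toReal_mul,
    ENNReal.toReal_sum fun s _ => ENNReal.sum_ne_top.2 fun t _ => hfin s t,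
    ENNReal.toReal_sum fun s _ => hfin s s']
  simp only [ENNReal.toReal_sum fun t _ => hfin _ t, ENNReal.toReal_mul]
  exact h

/-- Belief correctness: the joint distribution of (history, current state)
factorizes through the belief, i.e. the conditional distribution of the
latent state given the observable history is the belief-state b(h). -/
theorem joint_factorizes_through_belief
    {S A O : Type*} [Fintype S] [Fintype A] [Fintype O]
    [Nonempty S] [Nonempty A] [Nonempty O]
    (T : S → A → PMF S) (Z : S → PMF O) (R : S → A → ℝ)
    (γ : ℝ) (hγ0 : 0 ≤ γ) (hγ1 : γ < 1)
    (π : List (A × O) → PMF A)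
    (μ : PMF S)
    (b : List (A × O) → PMF S)
    (hb0 : b ([] : List (A × O)) = μ)
    (hb : ∀ (h : List (A × O)) (a : A) (o : O) (s' : S),
      (b (h ++ [(a, o)]) s').toReal *
        (∑ s : S, ∑ t : S, (b h s).toReal * (T s a t).toReal * (Z t o).toReal)
      = ∑ s : S, (b h s).toReal * (T s a s').toReal * (Z s' o).toReal)
    (jointPMF : ℕ → PMF (List (A × O) × S))
    (hJ0 : jointPMF 0 = μ.map (fun s => (([] : List (A × O)), s)))
    (hJ : ∀ n, jointPMF (n + 1) =
      (jointPMF n).bind fun hs =>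
        (π hs.1).bind fun a =>
          (T hs.2 a).bind fun s' =>
            (Z s').bind fun o =>
              PMF.pure (hs.1 ++ [(a, o)], s')) :
    ∀ n : ℕ, jointPMF n =
      ((jointPMF n).map Prod.fst).bind
        (fun h => (b h).map (fun s => (h, s))) := by
  have step : ∀ h a, ((b h).bind fun s => (T s a).bind fun s' => (Z s').bind fun o =>
      PMF.pure (h ++ [(a, o)], s')) =
      (((b h).bind fun s => T s a).bind Z).bind fun o =>
        (b (h ++ [(a, o)])).map fun s => (h ++ [(a, o)], s) := by
    intro h a
    have key := congrArg (PMF.map fun x : O × S => (h ++ [(a, x.1)], x.2))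
      (PMF.bind_bind_pure_eq_of_bayes ((b h).bind fun s => T s a) Z (fun o => b (h ++ [(a, o)]))
        fun o s' => belief_bayes_ennreal (b h) (fun s => T s a) Z _ o s' (hb h a o s'))
    simpa only [PMF.map_bind, PMF.pure_bind, PMF.bind_bind, ← PMF.bind_pure_comp,
      Function.comp_def] using key
  have mixture : ∀ n, ∃ ν : PMF (List (A × O)),
      jointPMF n = ν.bind fun h => (b h).map fun s => (h, s) := by
    intro n
    induction n with
    | zero => exact ⟨PMF.pure [], by rw [hJ0, PMF.pure_bind, hb0]⟩
    | succ n ih =>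
      obtain ⟨ν, hν⟩ := ih
      refine ⟨ν.bind fun h => (π h).bind fun a =>
        (((b h).bind fun s => T s a).bind Z).bind fun o => PMF.pure (h ++ [(a, o)]), ?_⟩
      rw [hJ, hν, PMF.bind_bind, PMF.bind_bind]
      congr 1
      funext h
      rw [PMF.bind_map, PMF.bind_bind]
      simp only [Function.comp_def]
      rw [PMF.bind_comm]
      congr 1
      funext a
      rw [step]
      simp only [PMF.bind_bind, PMF.pure_bind]
  intro n
  obtain ⟨ν, hν⟩ := mixture n
  rw [hν, PMF.map_fst_bind_map_mk]
end

section
/- Unbiasedness of the asymmetric policy-gradient estimator at each time step: for any belief b satisfying the Bayes recursion with b [] = μ, any n, m : ℕ, and any function g : List (A × O) → A → ℝ, Σ_{(h,s)} jointPMF n (h,s) * Σ_a π h a * QHS m h s a * g h a = Σ_{(h,s)} jointPMF n (h,s) * Σ_a π h a * QH m h a * g h a. (Finite-horizon core of the paper's Theorem 5, the Asymmetric Policy Gradient theorem: replacing Q^π(h_t,a_t) by Q^π(h_t,s_t,a_t) in the policy gradient expectation leaves it unchanged; taking g = ∇_θ log π recovers the theorem.) -/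
namespace POMDP

variable {S A O : Type*}

/-- One step of the joint history-state dynamics under the policy `π`. -/
noncomputable def step (T : S → A → PMF S) (Z : S → PMF O) (π : List (A × O) → PMF A)
    (hs : List (A × O) × S) : PMF (List (A × O) × S) :=
  (π hs.1).bind fun a => (T hs.2 a).bind fun s' => (Z s').bind fun o =>
    PMF.pure (hs.1 ++ [(a, o)], s')

lemma sum_toReal_eq_one [Fintype S] (p : PMF S) : ∑ s, (p s).toReal = 1 := by
  rw [← ENNReal.toReal_sum fun s _ => p.apply_ne_top s, ← tsum_fintype (L := .unconditional S),
    p.tsum_coe, ENNReal.toReal_one]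

lemma length_eq_of_mem_support_step {T : S → A → PMF S} {Z : S → PMF O}
    {π : List (A × O) → PMF A} {hs hs' : List (A × O) × S}
    (h : hs' ∈ (step T Z π hs).support) : hs'.1.length = hs.1.length + 1 := by
  simp only [step, PMF.mem_support_bind_iff, PMF.support_pure, Set.mem_singleton_iff] at h
  obtain ⟨a, -, s', -, o, -, rfl⟩ := h
  simp

lemma step_apply_concat_of_ne (T : S → A → PMF S) (Z : S → PMF O) (π : List (A × O) → PMF A)
    {h k : List (A × O)} (hk : k ≠ h) (s s' : S) (a : A) (o : O) :
    step T Z π (k, s) (h ++ [(a, o)], s') = 0 := by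
  rw [PMF.apply_eq_zero_iff]
  intro hmem
  simp only [step, PMF.mem_support_bind_iff, PMF.support_pure, Set.mem_singleton_iff,
    Prod.mk.injEq] at hmem
  obtain ⟨a', -, s'', -, o', -, heq, -⟩ := hmem
  exact hk (List.append_inj_left' heq rfl).symm

variable [Fintype S] [Fintype O]

/-- If the Bayes recursion holds for the belief `b` at `h`, the belief average of a one-step
lookahead is the predictive average of the belief averages at the successor histories. -/
lemma sum_belief_mul_lookahead {T : S → A → PMF S} {Z : S → PMF O}
    {b : List (A × O) → PMF S} {h : List (A × O)} {a : A}
    (hb : ∀ (o : O) (s' : S),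
      (b (h ++ [(a, o)]) s').toReal *
        (∑ s : S, ∑ t : S, (b h s).toReal * (T s a t).toReal * (Z t o).toReal)
      = ∑ s : S, (b h s).toReal * (T s a s').toReal * (Z s' o).toReal)
    (F : O → S → ℝ) :
    ∑ s, (b h s).toReal * ∑ s', (T s a s').toReal * ∑ o, (Z s' o).toReal * F o s' =
      ∑ o, (∑ s, ∑ s', (b h s).toReal * (T s a s').toReal * (Z s' o).toReal) *
        ∑ s', (b (h ++ [(a, o)]) s').toReal * F o s' := by
  calc _ = ∑ s, ∑ s', ∑ o, (b h s).toReal * (T s a s').toReal * (Z s' o).toReal * F o s' := by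
        simp only [Finset.mul_sum, mul_assoc]
    _ = ∑ o, ∑ s', ∑ s, (b h s).toReal * (T s a s').toReal * (Z s' o).toReal * F o s' := by
        rw [Finset.sum_comm]
        conv_rhs => rw [Finset.sum_comm]
        refine Finset.sum_congr rfl fun s' _ => ?_
        rw [Finset.sum_comm]
    _ = _ := by
        refine Finset.sum_congr rfl fun o _ => ?_
        rw [Finset.mul_sum]
        refine Finset.sum_congr rfl fun s' _ => ?_
        rw [← Finset.sum_mul, ← hb o s']
        ring

variable [Fintype A]

lemma step_apply_concat (T : S → A → PMF S) (Z : S → PMF O) (π : List (A × O) → PMF A)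
    (h : List (A × O)) (s s' : S) (a : A) (o : O) :
    step T Z π (h, s) (h ++ [(a, o)], s') = π h a * (T s a s' * Z s' o) := by
  simp only [step, PMF.bind_apply, tsum_fintype]
  rw [Finset.sum_eq_single a, Finset.sum_eq_single s', Finset.sum_eq_single o]
  · simp
  · intro o' _ ho
    simp [PMF.pure_apply, ho.symm]
  · simp
  · intro t _ ht
    simp [PMF.pure_apply, ht.symm]
  · simp
  · intro a' _ ha
    simp [PMF.pure_apply, ha.symm]
  · simp

lemma toReal_bind_step_apply_concat (T : S → A → PMF S) (Z : S → PMF O)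
    (π : List (A × O) → PMF A) (J : PMF (List (A × O) × S))
    (h : List (A × O)) (s' : S) (a : A) (o : O) :
    (J.bind (step T Z π) (h ++ [(a, o)], s')).toReal =
      (π h a).toReal *
        ∑ s, (J (h, s)).toReal * (T s a s').toReal * (Z s' o).toReal := by
  have key : J.bind (step T Z π) (h ++ [(a, o)], s') =
      ∑ s, J (h, s) * (π h a * (T s a s' * Z s' o)) := by
    rw [PMF.bind_apply, ENNReal.tsum_prod', tsum_eq_single h]
    · simp only [tsum_fintype, step_apply_concat]
    · intro k hk
      simp [step_apply_concat_of_ne T Z π hk]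
  rw [key, ENNReal.toReal_sum, Finset.mul_sum]
  · refine Finset.sum_congr rfl fun s _ => ?_
    simp only [ENNReal.toReal_mul]
    ring
  · intro s _
    exact ENNReal.mul_ne_top (PMF.apply_ne_top _ _) (ENNReal.mul_ne_top (PMF.apply_ne_top _ _)
      (ENNReal.mul_ne_top (PMF.apply_ne_top _ _) (PMF.apply_ne_top _ _)))

end POMDP


/-- Finite-horizon core of the Asymmetric Policy Gradient theorem:
replacing Q^π(h,a) by Q^π(h,s,a) in the policy-gradient expectation
leaves it unchanged. -/
theorem asymmetric_policy_gradient_unbiased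
    {S A O : Type*} [Fintype S] [Fintype A] [Fintype O]
    [Nonempty S] [Nonempty A] [Nonempty O]
    (T : S → A → PMF S) (Z : S → PMF O) (R : S → A → ℝ)
    (γ : ℝ) (hγ0 : 0 ≤ γ) (hγ1 : γ < 1)
    (π : List (A × O) → PMF A)
    (μ : PMF S)
    (b : List (A × O) → PMF S)
    (hb0 : b ([] : List (A × O)) = μ)
    (hb : ∀ (h : List (A × O)) (a : A) (o : O) (s' : S),
      (b (h ++ [(a, o)]) s').toReal *
        (∑ s : S, ∑ t : S, (b h s).toReal * (T s a t).toReal * (Z t o).toReal)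
      = ∑ s : S, (b h s).toReal * (T s a s').toReal * (Z s' o).toReal)
    (V : ℕ → List (A × O) → S → ℝ)
    (hV0 : ∀ h s, V 0 h s = 0)
    (hV : ∀ n h s, V (n + 1) h s =
      ∑ a : A, (π h a).toReal *
        (R s a + γ * ∑ s' : S, (T s a s').toReal *
          ∑ o : O, (Z s' o).toReal * V n (h ++ [(a, o)]) s'))
    (VH : ℕ → List (A × O) → ℝ)
    (hVH0 : ∀ h, VH 0 h = 0)
    (hVH : ∀ n h, VH (n + 1) h =
      ∑ a : A, (π h a).toReal *
        ((∑ s : S, (b h s).toReal * R s a) +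
          γ * ∑ o : O,
            (∑ s : S, ∑ s' : S,
              (b h s).toReal * (T s a s').toReal * (Z s' o).toReal) *
            VH n (h ++ [(a, o)])))
    (QHS : ℕ → List (A × O) → S → A → ℝ)
    (hQHS : ∀ n h s a, QHS n h s a =
      R s a + γ * ∑ s' : S, (T s a s').toReal *
        ∑ o : O, (Z s' o).toReal * V n (h ++ [(a, o)]) s')
    (QH : ℕ → List (A × O) → A → ℝ)
    (hQH : ∀ n h a, QH n h a =
      (∑ s : S, (b h s).toReal * R s a) +
        γ * ∑ o : O,
          (∑ s : S, ∑ s' : S,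
            (b h s).toReal * (T s a s').toReal * (Z s' o).toReal) *
          VH n (h ++ [(a, o)]))
    (jointPMF : ℕ → PMF (List (A × O) × S))
    (hJ0 : jointPMF 0 = μ.map (fun s => (([] : List (A × O)), s)))
    (hJ : ∀ n, jointPMF (n + 1) =
      (jointPMF n).bind fun hs =>
        (π hs.1).bind fun a =>
          (T hs.2 a).bind fun s' =>
            (Z s').bind fun o =>
              PMF.pure (hs.1 ++ [(a, o)], s')) :
    ∀ (n m : ℕ) (g : List (A × O) → A → ℝ),
      (∑' hs : List (A × O) × S,
        (jointPMF n hs).toReal *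
          ∑ a : A, (π hs.1 a).toReal * QHS m hs.1 hs.2 a * g hs.1 a)
      = ∑' hs : List (A × O) × S,
          (jointPMF n hs).toReal *
            ∑ a : A, (π hs.1 a).toReal * QH m hs.1 a * g hs.1 a := by
  intro n m g
  have hJstep (n : ℕ) : jointPMF (n + 1) = (jointPMF n).bind (POMDP.step T Z π) := hJ n
  have hlen (n : ℕ) (hs : List (A × O) × S) (hmem : hs ∈ (jointPMF n).support) :
      hs.1.length = n := by
    induction n generalizing hs with
    | zero =>
      rw [hJ0, PMF.mem_support_map_iff] at hmem
      obtain ⟨s, -, rfl⟩ := hmem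
      rfl
    | succ n ih =>
      rw [hJstep, PMF.mem_support_bind_iff] at hmem
      obtain ⟨k, hk, hmem⟩ := hmem
      rw [POMDP.length_eq_of_mem_support_step hmem, ih k hk]
  have hfactor (n : ℕ) (h : List (A × O)) :
      ∃ w : ℝ, ∀ s, (jointPMF n (h, s)).toReal = w * (b h s).toReal := by
    have hzero (n : ℕ) (h : List (A × O)) (hn : h.length ≠ n) :
        ∃ w : ℝ, ∀ s, (jointPMF n (h, s)).toReal = w * (b h s).toReal := by
      refine ⟨0, fun s => ?_⟩
      rw [(PMF.apply_eq_zero_iff _ _).2 fun hmem => hn (hlen n (h, s) hmem)]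
      simp
    induction n generalizing h with
    | zero =>
      rcases eq_or_ne h [] with rfl | hne
      · refine ⟨1, fun s => ?_⟩
        rw [hJ0, hb0, one_mul, PMF.map_apply, tsum_eq_single s]
        · simp
        · intro t ht
          simp [ht.symm]
      · exact hzero 0 h (by simpa using hne)
    | succ n ih =>
      rcases List.eq_nil_or_concat h with rfl | ⟨k, ⟨a, o⟩, rfl⟩
      · exact hzero (n + 1) [] (by simp)
      · obtain ⟨w, hw⟩ := ih k
        refine ⟨w * (π k a).toReal *
          ∑ s, ∑ t, (b k s).toReal * (T s a t).toReal * (Z t o).toReal, fun s' => ?_⟩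
        rw [List.concat_eq_append, hJstep, POMDP.toReal_bind_step_apply_concat, mul_assoc,
          mul_comm (∑ s, _) (ENNReal.toReal _), hb k a o s']
        simp only [hw, mul_assoc, ← Finset.mul_sum]
        ring
  have hQ_of_V (m : ℕ) (hVm : ∀ h, VH m h = ∑ s, (b h s).toReal * V m h s)
      (h : List (A × O)) (a : A) :
      QH m h a = ∑ s, (b h s).toReal * QHS m h s a := by
    simp only [hQH, hQHS, mul_add, Finset.sum_add_distrib, hVm]
    rw [← POMDP.sum_belief_mul_lookahead (hb h a), Finset.mul_sum]
    simp only [mul_left_comm γ]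
  have hVH_eq (m : ℕ) (h : List (A × O)) : VH m h = ∑ s, (b h s).toReal * V m h s := by
    induction m generalizing h with
    | zero => simp [hVH0, hV0]
    | succ m ih =>
      simp only [hVH, hV, ← hQH, ← hQHS]
      simp only [hQ_of_V m ih, Finset.mul_sum]
      rw [Finset.sum_comm]
      simp only [mul_left_comm]
  have hsummable (X : List (A × O) × S → ℝ) :
      Summable fun hs => (jointPMF n hs).toReal * X hs := by
    refine summable_of_hasFiniteSupport (((List.finite_length_eq (A × O) n).prod
      (Set.finite_univ (α := S))).subset fun hs hhs => ?_)
    refine ⟨hlen n hs fun hz => hhs ?_, Set.mem_univ _⟩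
    simp [hz]
  rw [(hsummable _).tsum_prod, (hsummable _).tsum_prod]
  refine tsum_congr fun h => ?_
  obtain ⟨w, hw⟩ := hfactor n h
  simp only [tsum_fintype, hw, mul_assoc, ← Finset.mul_sum]
  congr 1
  rw [← Finset.sum_mul, POMDP.sum_toReal_eq_one, one_mul]
  simp only [hQ_of_V m (hVH_eq m), Finset.mul_sum, Finset.sum_mul]
  rw [Finset.sum_comm]
  simp only [mul_left_comm, mul_assoc]
end

section
/- For a reactive policy, the history-state value depends on the history only through its last observation: if π h = ρ (lastObs h) for all nonempty histories h (for some ρ : O → PMF A), then for all n, all nonempty histories h' and h'' with lastObs h' = lastObs h'', and all states s, V n h' s = V n h'' s. (The invariance underlying the paper's analysis of reactive policies in Sections 4.2 and 4.3.) -/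
/-- For a reactive policy, the history-state value depends on the history
only through its last observation. -/
theorem reactive_value_depends_only_on_last_observation
    {S A O : Type*} [Fintype S] [Fintype A] [Fintype O]
    [Nonempty S] [Nonempty A] [Nonempty O]
    (T : S → A → PMF S) (Z : S → PMF O) (R : S → A → ℝ)
    (γ : ℝ) (hγ0 : 0 ≤ γ) (hγ1 : γ < 1)
    (π : List (A × O) → PMF A)
    (ρ : O → PMF A)
    (hreactive : ∀ (h : List (A × O)) (hne : h ≠ []),
      π h = ρ (h.getLast hne).2)
    (V : ℕ → List (A × O) → S → ℝ)
    (hV0 : ∀ h s, V 0 h s = 0)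
    (hV : ∀ n h s, V (n + 1) h s =
      ∑ a : A, (π h a).toReal *
        (R s a + γ * ∑ s' : S, (T s a s').toReal *
          ∑ o : O, (Z s' o).toReal * V n (h ++ [(a, o)]) s')) :
    ∀ (n : ℕ) (h' h'' : List (A × O)) (hne' : h' ≠ []) (hne'' : h'' ≠ []),
      (h'.getLast hne').2 = (h''.getLast hne'').2 →
        ∀ s : S, V n h' s = V n h'' s := by
  intro n
  induction n with
  | zero => intro h' h'' _ _ _ s; rw [hV0, hV0]
  | succ n ih =>
    intro h' h'' hne' hne'' hlast s
    have happend (a : A) (o : O) (s' : S) :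
        V n (h' ++ [(a, o)]) s' = V n (h'' ++ [(a, o)]) s' :=
      ih _ _ (by simp) (by simp) (by simp) s'
    simp only [hV, hreactive h' hne', hreactive h'' hne'', hlast, happend]
end

section
/- Under a deterministic observation function and a reactive policy, the history-state value reduces to the Markov state value: if Z s = PMF.pure (ζ s) for a function ζ : S → O, and π h = ρ (lastObs h) for all nonempty h, then for all n, all nonempty histories h, and all states s with lastObs h = ζ s, V n h s = W n s, where W is the n-step state value of the induced reactive Markov policy. (The key reduction in the paper's Theorem 3 for reactive policies under full observability.) -/
/-- Under a deterministic observation function and a reactive policy, the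
history-state value reduces to the Markov state value of the induced
reactive Markov policy. -/
theorem reactive_fully_observable_value_reduction
    {S A O : Type*} [Fintype S] [Fintype A] [Fintype O]
    [Nonempty S] [Nonempty A] [Nonempty O]
    (T : S → A → PMF S) (Z : S → PMF O) (R : S → A → ℝ)
    (γ : ℝ) (hγ0 : 0 ≤ γ) (hγ1 : γ < 1)
    (π : List (A × O) → PMF A)
    (ζ : S → O)
    (hdet : ∀ s : S, Z s = PMF.pure (ζ s))
    (ρ : O → PMF A)
    (hreactive : ∀ (h : List (A × O)) (hne : h ≠ []),
      π h = ρ (h.getLast hne).2)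
    (V : ℕ → List (A × O) → S → ℝ)
    (hV0 : ∀ h s, V 0 h s = 0)
    (hV : ∀ n h s, V (n + 1) h s =
      ∑ a : A, (π h a).toReal *
        (R s a + γ * ∑ s' : S, (T s a s').toReal *
          ∑ o : O, (Z s' o).toReal * V n (h ++ [(a, o)]) s'))
    (W : ℕ → S → ℝ)
    (hW0 : ∀ s, W 0 s = 0)
    (hW : ∀ n s, W (n + 1) s =
      ∑ a : A, (ρ (ζ s) a).toReal *
        (R s a + γ * ∑ s' : S, (T s a s').toReal * W n s')) :
    ∀ (n : ℕ) (h : List (A × O)) (hne : h ≠ []) (s : S),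
      (h.getLast hne).2 = ζ s → V n h s = W n s := by
  intro n
  induction n with
  | zero => intro h _ s _; rw [hV0, hW0]
  | succ n ih =>
    intro h hne s hs
    have hobs : ∀ a s', ∑ o : O, (Z s' o).toReal * V n (h ++ [(a, o)]) s' = W n s' := by
      intro a s'
      rw [Finset.sum_eq_single (ζ s')]
      · rw [hdet, PMF.pure_apply_self, ENNReal.toReal_one, one_mul]
        exact ih _ (by simp) s' (by simp)
      · intro o _ ho
        rw [hdet, PMF.pure_apply_of_ne _ _ ho, ENNReal.toReal_zero, zero_mul]
      · exact fun hmem => absurd (Finset.mem_univ _) hmem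
    simp only [hV, hW, hreactive h hne, hs, hobs]
end

section
/- Theorem 3 (unbiasedness of state values under bijective full observability, finite-horizon form): suppose Z s = PMF.pure (ζ s) with ζ : S → O injective, π h = ρ (lastObs h) for all nonempty h, and b is a belief satisfying the Bayes recursion. Then for every nonempty history h whose belief is supported on states consistent with its last observation (i.e., b h s ≠ 0 → ζ s = lastObs h) and every n, VH n h = Σ_s b h s * W n s; that is, v^π(h) = E_{s∼b(h)}[v^π(s)]. -/
theorem PMF.sum_toReal_eq_one {α : Type*} [Fintype α] (p : PMF α) :
    ∑ x : α, (p x).toReal = 1 := by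
  rw [← ENNReal.toReal_sum fun x _ => p.apply_ne_top x, ← tsum_fintype (L := .unconditional α),
    p.tsum_coe, ENNReal.toReal_one]

/-- Theorem 3 (finite-horizon): under bijective full observability
(deterministic injective observation function) and a reactive policy, the
state value is an unbiased estimate of the history value:
v^π(h) = E_{s∼b(h)}[v^π(s)]. -/
theorem unbiased_state_values_bijective_full_observability
    {S A O : Type*} [Fintype S] [Fintype A] [Fintype O]
    [Nonempty S] [Nonempty A] [Nonempty O]
    (T : S → A → PMF S) (Z : S → PMF O) (R : S → A → ℝ)
    (γ : ℝ) (hγ0 : 0 ≤ γ) (hγ1 : γ < 1)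
    (π : List (A × O) → PMF A)
    (ζ : S → O)
    (hdet : ∀ s : S, Z s = PMF.pure (ζ s))
    (hinj : Function.Injective ζ)
    (ρ : O → PMF A)
    (hreactive : ∀ (h : List (A × O)) (hne : h ≠ []),
      π h = ρ (h.getLast hne).2)
    (b : List (A × O) → PMF S)
    (hb : ∀ (h : List (A × O)) (a : A) (o : O) (s' : S),
      (b (h ++ [(a, o)]) s').toReal *
        (∑ s : S, ∑ t : S, (b h s).toReal * (T s a t).toReal * (Z t o).toReal)
      = ∑ s : S, (b h s).toReal * (T s a s').toReal * (Z s' o).toReal)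
    (VH : ℕ → List (A × O) → ℝ)
    (hVH0 : ∀ h, VH 0 h = 0)
    (hVH : ∀ n h, VH (n + 1) h =
      ∑ a : A, (π h a).toReal *
        ((∑ s : S, (b h s).toReal * R s a) +
          γ * ∑ o : O,
            (∑ s : S, ∑ s' : S,
              (b h s).toReal * (T s a s').toReal * (Z s' o).toReal) *
            VH n (h ++ [(a, o)])))
    (W : ℕ → S → ℝ)
    (hW0 : ∀ s, W 0 s = 0)
    (hW : ∀ n s, W (n + 1) s =
      ∑ a : A, (ρ (ζ s) a).toReal *
        (R s a + γ * ∑ s' : S, (T s a s').toReal * W n s')) :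
    ∀ (h : List (A × O)) (hne : h ≠ []),
      (∀ s : S, b h s ≠ 0 → ζ s = (h.getLast hne).2) →
        ∀ n : ℕ, VH n h = ∑ s : S, (b h s).toReal * W n s := by
  intro h hne hsupp n
  induction n generalizing h with
  | zero => simp [hVH0, hW0]
  | succ n ih =>
    -- One-step lookahead: the value after `(a, o)`, weighted by the probability of `o`.
    have lookahead (a : A) (o : O) :
        (∑ s : S, ∑ t : S, (b h s).toReal * (T s a t).toReal * (Z t o).toReal) *
          VH n (h ++ [(a, o)]) =
        ∑ t : S, (∑ s : S, (b h s).toReal * (T s a t).toReal * (Z t o).toReal) * W n t := by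
      simp only [← hb h a o]
      by_cases hP : (∑ s : S, ∑ t : S,
          (b h s).toReal * (T s a t).toReal * (Z t o).toReal) = 0
      · simp [hP]
      · rw [ih (h ++ [(a, o)]) (by simp), Finset.mul_sum]
        · exact Finset.sum_congr rfl fun t _ => by ring
        · intro t ht
          by_contra hζ
          have hZ : Z t o = 0 := by
            rw [hdet, PMF.pure_apply_of_ne]
            simpa [eq_comm] using hζ
          have hbt := hb h a o t
          simp only [hZ, ENNReal.toReal_zero, mul_zero, Finset.sum_const_zero] at hbt
          exact ENNReal.toReal_ne_zero.2 ⟨ht, (b _).apply_ne_top t⟩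
            ((mul_eq_zero.1 hbt).resolve_right hP)
    have marginal (a : A) :
        ∑ o : O, ∑ t : S,
          (∑ s : S, (b h s).toReal * (T s a t).toReal * (Z t o).toReal) * W n t =
        ∑ s : S, (b h s).toReal * ∑ t : S, (T s a t).toReal * W n t := by
      rw [Finset.sum_comm]
      simp only [← Finset.sum_mul, Finset.mul_sum]
      rw [Finset.sum_comm (s := (Finset.univ : Finset S))]
      refine Finset.sum_congr rfl fun t _ => ?_
      rw [← Finset.mul_sum, PMF.sum_toReal_eq_one, mul_one, Finset.sum_mul]
      simp only [mul_assoc]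
    have reactive (s : S) : (b h s).toReal * W (n + 1) s =
        ∑ a : A, (π h a).toReal * ((b h s).toReal * R s a +
          γ * ((b h s).toReal * ∑ t : S, (T s a t).toReal * W n t)) := by
      by_cases hs : b h s = 0
      · simp [hs]
      · rw [hW, hsupp s hs, hreactive h hne, Finset.mul_sum]
        exact Finset.sum_congr rfl fun a _ => by ring
    simp only [hVH, lookahead, marginal, reactive]
    rw [Finset.sum_comm]
    simp only [← Finset.mul_sum, Finset.sum_add_distrib]
end

section
/- If a state value function is an unbiased estimator of a history value function, then the induced state action-value function is an unbiased estimator of the induced history action-value function: given Vs : S → ℝ and Vh : List (A × O) → ℝ with Σ_s b h s * Vs s = Vh h for all histories h, defining Qs s a := R s a + γ * Σ_{s'} T s a s' * Vs s' and Qh h a := Σ_s b h s * R s a + γ * Σ_o P(o | h,a) * Vh (h ++ [(a,o)]), one has Σ_s b h s * Qs s a = Qh h a for all h and a. (The first part of the appendix proof sketch for Theorem 2.) -/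
/-- If a state value function is an unbiased estimator of a history value
function, then the induced state action-value function is an unbiased
estimator of the induced history action-value function. -/
theorem unbiased_state_value_induces_unbiased_action_value
    {S A O : Type*} [Fintype S] [Fintype A] [Fintype O]
    [Nonempty S] [Nonempty A] [Nonempty O]
    (T : S → A → PMF S) (Z : S → PMF O) (R : S → A → ℝ)
    (γ : ℝ) (hγ0 : 0 ≤ γ) (hγ1 : γ < 1)
    (b : List (A × O) → PMF S)
    (hb : ∀ (h : List (A × O)) (a : A) (o : O) (s' : S),
      (b (h ++ [(a, o)]) s').toReal *
        (∑ s : S, ∑ t : S, (b h s).toReal * (T s a t).toReal * (Z t o).toReal)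
      = ∑ s : S, (b h s).toReal * (T s a s').toReal * (Z s' o).toReal)
    (Vs : S → ℝ) (Vh : List (A × O) → ℝ)
    (hunbiased : ∀ h : List (A × O), (∑ s : S, (b h s).toReal * Vs s) = Vh h)
    (Qs : S → A → ℝ)
    (hQs : ∀ s a, Qs s a = R s a + γ * ∑ s' : S, (T s a s').toReal * Vs s')
    (Qh : List (A × O) → A → ℝ)
    (hQh : ∀ h a, Qh h a =
      (∑ s : S, (b h s).toReal * R s a) +
        γ * ∑ o : O,
          (∑ s : S, ∑ s' : S,
            (b h s).toReal * (T s a s').toReal * (Z s' o).toReal) *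
          Vh (h ++ [(a, o)])) :
    ∀ (h : List (A × O)) (a : A),
      (∑ s : S, (b h s).toReal * Qs s a) = Qh h a := by
  intro h a
  have bayes : ∀ o : O,
      (∑ s : S, ∑ s' : S, (b h s).toReal * (T s a s').toReal * (Z s' o).toReal) *
          Vh (h ++ [(a, o)]) =
        ∑ s' : S, ∑ s : S,
          (b h s).toReal * (T s a s').toReal * (Z s' o).toReal * Vs s' := by
    intro o
    rw [← hunbiased, Finset.mul_sum]
    refine Finset.sum_congr rfl fun s' _ => ?_
    rw [← Finset.sum_mul, ← hb h a o s']
    ring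
  have marginal :
      ∑ o : O, ∑ s' : S, ∑ s : S,
          (b h s).toReal * (T s a s').toReal * (Z s' o).toReal * Vs s' =
        ∑ s : S, (b h s).toReal * ∑ s' : S, (T s a s').toReal * Vs s' := by
    rw [Finset.sum_comm]
    simp_rw [Finset.mul_sum]
    rw [Finset.sum_comm (s := (Finset.univ : Finset S)) (t := (Finset.univ : Finset S))]
    refine Finset.sum_congr rfl fun s' _ => ?_
    rw [Finset.sum_comm]
    refine Finset.sum_congr rfl fun s _ => ?_
    rw [← Finset.sum_mul, ← Finset.mul_sum, PMF.sum_toReal_eq_one]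
    ring
  rw [hQh, Finset.sum_congr rfl fun o _ => bayes o, marginal, Finset.mul_sum,
    ← Finset.sum_add_distrib]
  refine Finset.sum_congr rfl fun s _ => ?_
  rw [hQs]
  ring
end

section
/- Proof by example of Theorem 2 (the state value function is a biased estimator of the history value function): in the good/bad POMDP with the reactive last-observation policy and any γ ∈ (0,1), let h be a history whose single observation is good (h = [(a₀, true)] for any action a₀), and let b h be the Bayesian posterior assigning probability 2/3 to the good state and 1/3 to the bad state. Then the true infinite-horizon history value v(h) := lim_{n→∞} Σ_s b h s * V n h s equals (6-γ)/(6(1-γ)), whereas the belief-expectation of the infinite-horizon state values Σ_s b h s * (lim_{n→∞} W n s) equals 5/(6(1-γ)), and these two quantities are not equal; hence v^π(h) ≠ E_{s∼b(h)}[v^π(s)]. -/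
open Filter Topology

/-- Transition kernel of the good/bad POMDP: states deterministically
transition into themselves. -/
noncomputable def gbT : Bool → Bool → PMF Bool := fun s _ => PMF.pure s

/-- Observation kernel of the good/bad POMDP (true = good, false = bad):
the good state always emits the good observation, the bad state emits a
uniformly random observation. -/
noncomputable def gbZ : Bool → PMF Bool := fun s =>
  if s then PMF.pure true else PMF.uniformOfFintype Bool

/-- Reward of the good/bad POMDP: reward 1 exactly when the good action is
chosen. -/
def gbR : Bool → Bool → ℝ := fun _ a => if a then 1 else 0

/-- The reactive last-observation policy: on a nonempty history it
deterministically selects the action equal to the last observation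
(on the empty history it is irrelevant and set arbitrarily). -/
noncomputable def gbPi (h : List (Bool × Bool)) : PMF Bool :=
  match h.getLast? with
  | some p => PMF.pure p.2
  | none => PMF.pure true

/-- n-step history-state value of the reactive last-observation policy in
the good/bad POMDP. -/
noncomputable def gbV (γ : ℝ) : ℕ → List (Bool × Bool) → Bool → ℝ
  | 0, _, _ => 0
  | n + 1, h, s =>
      ∑ a : Bool, (gbPi h a).toReal *
        (gbR s a + γ * ∑ s' : Bool, (gbT s a s').toReal *
          ∑ o : Bool, (gbZ s' o).toReal * gbV γ n (h ++ [(a, o)]) s')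

/-- n-step reactive state value in the good/bad POMDP. -/
noncomputable def gbW (γ : ℝ) : ℕ → Bool → ℝ
  | 0, _ => 0
  | n + 1, s => ∑ o : Bool, (gbZ s o).toReal * (gbR s o + γ * gbW γ n s)

/-- The belief after a single good observation: 2/3 on good, 1/3 on bad. -/
noncomputable def gbBelief : Bool → ℝ := fun s => if s then 2 / 3 else 1 / 3

/-- The history-state value started after observing `o` depends on the history only through `o`. -/
theorem gbV_succ_append (γ : ℝ) (n : ℕ) (h : List (Bool × Bool)) (a o s : Bool) :
    gbV γ (n + 1) (h ++ [(a, o)]) s = gbR s o + γ * gbW γ n s := by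
  induction n generalizing h a o s with
  | zero => cases o <;> simp [gbV, gbW, gbPi, PMF.pure_apply]
  | succ n ih =>
    rw [gbV]
    simp only [ih]
    cases o <;> cases s <;> simp [gbW, gbPi, gbT, PMF.pure_apply]

/-- Closed form of the `n`-step reactive state value. -/
theorem gbW_eq (γ : ℝ) (hγ : γ ≠ 1) (n : ℕ) (s : Bool) :
    gbW γ n s = (if s then 1 else 1 / 2) * ((1 - γ ^ n) / (1 - γ)) := by
  have hne : 1 - γ ≠ 0 := sub_ne_zero.mpr hγ.symm
  induction n with
  | zero => simp [gbW]
  | succ n ih =>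
    rw [gbW]
    simp only [ih]
    cases s <;> simp [gbZ, gbR, PMF.pure_apply] <;> field_simp <;> ring

/-- The belief-expectation of the reactive state values converges to `5 / (6 * (1 - γ))`. -/
theorem tendsto_sum_gbBelief_mul_gbW (γ : ℝ) (hγ0 : 0 ≤ γ) (hγ1 : γ < 1) :
    Tendsto (fun n => ∑ s : Bool, gbBelief s * gbW γ n s) atTop (𝓝 (5 / (6 * (1 - γ)))) := by
  have hne : 1 - γ ≠ 0 := (sub_pos.mpr hγ1).ne'
  have hlim : Tendsto (fun n : ℕ => 5 / (6 * (1 - γ)) * (1 - γ ^ n)) atTop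
      (𝓝 (5 / (6 * (1 - γ)) * (1 - 0))) :=
    ((tendsto_pow_atTop_nhds_zero_of_lt_one hγ0 hγ1).const_sub 1).const_mul _
  rw [sub_zero, mul_one] at hlim
  refine hlim.congr fun n => ?_
  simp only [gbW_eq γ hγ1.ne, Fintype.sum_bool, gbBelief]
  simp
  field_simp
  ring

/-- Proof by example of Theorem 2: in the good/bad POMDP, for the history
consisting of a single good observation, the true history value is
(6-γ)/(6(1-γ)), the belief-expectation of the state values is 5/(6(1-γ)),
and the two are unequal: v^π(h) ≠ E_{s∼b(h)}[v^π(s)]. -/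
theorem gb_state_values_biased (γ : ℝ) (hγ0 : 0 < γ) (hγ1 : γ < 1)
    (a₀ : Bool) :
    Tendsto (fun n => ∑ s : Bool, gbBelief s * gbV γ n [(a₀, true)] s)
      atTop (nhds ((6 - γ) / (6 * (1 - γ)))) ∧
    Tendsto (fun n => ∑ s : Bool, gbBelief s * gbW γ n s)
      atTop (nhds (5 / (6 * (1 - γ)))) ∧
    (6 - γ) / (6 * (1 - γ)) ≠ 5 / (6 * (1 - γ)) := by
  have hne : 1 - γ ≠ 0 := (sub_pos.mpr hγ1).ne'
  have hW := tendsto_sum_gbBelief_mul_gbW γ hγ0.le hγ1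
  refine ⟨?_, hW, ?_⟩
  · rw [← tendsto_add_atTop_iff_nat 1]
    have hval : (6 - γ) / (6 * (1 - γ)) = 1 + γ * (5 / (6 * (1 - γ))) := by
      field_simp
      ring
    rw [hval]
    refine ((hW.const_mul γ).const_add 1).congr fun n => ?_
    have hV (s : Bool) : gbV γ (n + 1) [(a₀, true)] s = 1 + γ * gbW γ n s := by
      simpa [gbR] using gbV_succ_append γ n [] a₀ true s
    simp only [hV, Fintype.sum_bool, gbBelief]
    simp
    ring
  · rw [Ne, div_left_inj' (mul_ne_zero (by norm_num) hne)]
    linarith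
end
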